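/- Let G=(V,E) be a finite undirected graph with m = |E| ≥ 1 edges, let ε ∈ (0,1), and let w⁻, w⁺ be edge-weight vectors with 0 ≤ w⁻ₑ ≤ w⁺ₑ for every e ∈ E. Suppose that ‖w⁺ − w⁻‖_∞ ≤ √(2/m) · ε · D, where D is a real number with 0 < D ≤ max over nonempty S ⊆ V of f_{w⁺}(S). Let S⁻ be a densest subgraph with respect to w⁻. Then for every edge-weight vector w with w⁻ₑ ≤ wₑ ≤ w⁺ₑ for all e ∈ E and every nonempty subset T ⊆ V, it holds that f_w(S⁻) ≥ (1 − ε) · f_w(T); that is, the robust ratio of S⁻ under the edge-weight space ∏_{e∈E}[w⁻ₑ, w⁺ₑ] is at least 1 − ε. -/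

import Mathlib

open Finset
open scoped Classical

/-- The set of edges of `G` whose both endpoints lie in `S`, i.e. `E(S)`. -/
noncomputable def edgesIn {V : Type*} [Fintype V] (G : SimpleGraph V) (S : Finset V) :
    Finset (Sym2 V) :=
  G.edgeFinset.filter (fun e => ∀ v ∈ e, v ∈ S)

/-- The density `f_w(S) = w(S) / |S|` of the subgraph induced by `S`. -/
noncomputable def density {V : Type*} [Fintype V] (G : SimpleGraph V) (w : Sym2 V → ℝ)
    (S : Finset V) : ℝ :=
  (∑ e ∈ edgesIn G S, w e) / (S.card : ℝ)

theorem aux_card_le {V : Type*} [Fintype V] (G : SimpleGraph V) (S : Finset V) :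
    2 * (edgesIn G S).card ≤ S.card * S.card := by
  have hsub : edgesIn G S ⊆ S.offDiag.image Sym2.mk.uncurry := by
    intro e he
    induction e using Sym2.ind with
    | _ x y =>
      simp only [edgesIn, Finset.mem_filter, SimpleGraph.mem_edgeFinset,
        SimpleGraph.mem_edgeSet] at he
      refine Finset.mem_image.2 ⟨(x, y), ?_, rfl⟩
      exact Finset.mem_offDiag.2 ⟨he.2 x (by simp), he.2 y (by simp), he.1.ne⟩
  have h1 := Finset.card_le_card hsub
  rw [Sym2.card_image_offDiag, Nat.choose_two_right] at h1
  have h2 := Nat.div_mul_le_self (S.card * (S.card - 1)) 2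
  have h3 : S.card * (S.card - 1) ≤ S.card * S.card := Nat.mul_le_mul_left _ (Nat.sub_le _ _)
  omega

theorem aux_mono {V : Type*} [Fintype V] (G : SimpleGraph V) (a b : Sym2 V → ℝ)
    (h : ∀ e ∈ G.edgeFinset, a e ≤ b e) (S : Finset V) : density G a S ≤ density G b S := by
  unfold density
  gcongr with e he
  exact h e (Finset.mem_filter.1 he).1

theorem aux_diff {V : Type*} [Fintype V] (G : SimpleGraph V)
    (hm : 1 ≤ G.edgeFinset.card) (wm wp : Sym2 V → ℝ) (c : ℝ) (hc : 0 ≤ c)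
    (hdiff : ∀ e ∈ G.edgeFinset,
      |wp e - wm e| ≤ Real.sqrt (2 / (G.edgeFinset.card : ℝ)) * c)
    (S : Finset V) (hS : S.Nonempty) : density G wp S ≤ density G wm S + c := by
  have hs : (0 : ℝ) < S.card := by exact_mod_cast hS.card_pos
  have hm' : (0 : ℝ) < G.edgeFinset.card := by exact_mod_cast hm
  have h1 : (2 : ℝ) * (edgesIn G S).card ≤ S.card * S.card := by
    exact_mod_cast aux_card_le G S
  have h2 : ((edgesIn G S).card : ℝ) ≤ G.edgeFinset.card := by
    exact_mod_cast Finset.card_le_card (Finset.filter_subset _ _)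
  have h3 : ((edgesIn G S).card : ℝ) * Real.sqrt (2 / (G.edgeFinset.card : ℝ)) ≤ S.card := by
    refine (sq_le_sq₀ (by positivity) hs.le).1 ?_
    rw [mul_pow, Real.sq_sqrt (by positivity), ← mul_div_assoc, div_le_iff₀ hm']
    have h0 : (0 : ℝ) ≤ (edgesIn G S).card := by positivity
    nlinarith [mul_le_mul h1 h2 h0 (by positivity)]
  have h4 : ∑ e ∈ edgesIn G S, (wp e - wm e)
      ≤ (edgesIn G S).card * (Real.sqrt (2 / (G.edgeFinset.card : ℝ)) * c) := by
    rw [← nsmul_eq_mul]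
    exact Finset.sum_le_card_nsmul _ _ _ fun e he =>
      (le_abs_self _).trans (hdiff e (Finset.mem_filter.1 he).1)
  rw [Finset.sum_sub_distrib] at h4
  unfold density
  rw [div_add' _ _ _ hs.ne', div_le_div_iff_of_pos_right hs]
  nlinarith [mul_le_mul_of_nonneg_right h3 hc]

/-- Suppose `m = |E| ≥ 1`, `ε ∈ (0,1)`, `0 ≤ w⁻ ≤ w⁺` edgewise, and
`‖w⁺ − w⁻‖_∞ ≤ √(2/m) · ε · D`, where `0 < D` and `D` is at most the optimal density
with respect to `w⁺` (witnessed by some nonempty subset). If `S⁻` is a densest subgraph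
with respect to `w⁻`, then for every weight vector `w` with `w⁻ ≤ w ≤ w⁺` edgewise and
every nonempty `T ⊆ V`, `f_w(S⁻) ≥ (1 − ε) · f_w(T)`; that is, the robust ratio of
`S⁻` under the edge-weight space `∏ₑ[w⁻ₑ, w⁺ₑ]` is at least `1 − ε`. -/
theorem sampling_algorithm_robust_ratio {V : Type*} [Fintype V] (G : SimpleGraph V)
    (hm : 1 ≤ G.edgeFinset.card) (ε : ℝ) (hε : 0 < ε) (hε1 : ε < 1)
    (wm wp : Sym2 V → ℝ)
    (hw : ∀ e ∈ G.edgeFinset, 0 ≤ wm e ∧ wm e ≤ wp e)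
    (D : ℝ) (hD : 0 < D)
    (hDle : ∃ S : Finset V, S.Nonempty ∧ D ≤ density G wp S)
    (hdiff : ∀ e ∈ G.edgeFinset,
      |wp e - wm e| ≤ Real.sqrt (2 / (G.edgeFinset.card : ℝ)) * ε * D)
    (Sm : Finset V) (hSm : Sm.Nonempty)
    (hSmOpt : ∀ T : Finset V, T.Nonempty → density G wm T ≤ density G wm Sm)
    (w : Sym2 V → ℝ) (hwmid : ∀ e ∈ G.edgeFinset, wm e ≤ w e ∧ w e ≤ wp e)
    (T : Finset V) (hT : T.Nonempty) :
    (1 - ε) * density G w T ≤ density G w Sm := by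
  have key := aux_diff G hm wm wp (ε * D) (by positivity)
    (fun e he => by rw [← mul_assoc]; exact hdiff e he)
  obtain ⟨S, hS, hDS⟩ := hDle
  have a1 := key S hS
  have a2 := hSmOpt S hS
  have a3 := key T hT
  have a4 := hSmOpt T hT
  have a5 := aux_mono G w wp (fun e he => (hwmid e he).2) T
  have a6 := aux_mono G wm w (fun e he => (hwmid e he).1) Sm
  have a7 : (1 - ε) * D ≤ density G wm Sm := by linarith
  have a8 : density G w T ≤ density G wm Sm + ε * D := by linarith
  nlinarith [mul_le_mul_of_nonneg_left a8 (sub_nonneg.2 hε1.le),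
    mul_le_mul_of_nonneg_left a7 hε.le]
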